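/- The variance V_n of the number of non-zero-blocks of a uniformly random (c,m)-colored B_n-partition satisfies V_n ~ n/log² n as n → ∞; that is, V_n·(log² n)/n → 1. In particular, V_n → ∞ as n → ∞. -/

import Mathlib

open Filter

def Tnk (m c : ℕ) : ℕ → ℕ → ℕ
  | 0, 0 => 1
  | 0, _ + 1 => 0
  | n + 1, 0 => c * Tnk m c n 0
  | n + 1, k + 1 => Tnk m c n k + (m * (k + 1) + c) * Tnk m c n (k + 1)

def Ttot (m c n : ℕ) : ℕ := ∑ k ∈ Finset.range (n + 1), Tnk m c n k

/-- The expectation `E_n = (∑_k k·T_{n,k})/T_n`. -/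
noncomputable def En (m c n : ℕ) : ℝ :=
  (∑ k ∈ Finset.range (n + 1), (k : ℝ) * Tnk m c n k) / Ttot m c n

/-- The variance `V_n = (∑_k k²·T_{n,k})/T_n − E_n²`. -/
noncomputable def Vn (m c n : ℕ) : ℝ :=
  (∑ k ∈ Finset.range (n + 1), (k : ℝ) ^ 2 * Tnk m c n k) / Ttot m c n -
    En m c n ^ 2

/-!
By Dobiński's formula, `T_n` is up to the factor `exp (-1 / m)` the total mass of the weights
`(m * j + c) ^ n / (m ^ j * j!)`, and `V_n + 1 / m` is the variance of the probability law on `ℕ`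
proportional to them. The weights are log-concave. Their logarithmic ratio vanishes at a point `a`
with `n ~ a * log a` and is close to `-x / s` at `a + s * x`, where `s ^ 2 = a / log a`: on the
scale `s` the weights have a Gaussian profile. A tangent to the logarithm of the weights on each
side of `a` yields an exponential bound, so the rescaled moments converge to those of the standard
normal law by dominated convergence. Hence `V_n ~ s ^ 2 ~ n / log n ^ 2`.
-/

section DobinskiFormula

open Finset

theorem Tnk_eq_zero_of_lt (m c : ℕ) {n k : ℕ} (h : n < k) : Tnk m c n k = 0 := by
  induction n generalizing k with
  | zero =>
    obtain ⟨k, rfl⟩ := Nat.exists_eq_succ_of_ne_zero h.ne'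
    rfl
  | succ n ih =>
    obtain ⟨k, rfl⟩ := Nat.exists_eq_succ_of_ne_zero (Nat.ne_zero_of_lt h)
    simp only [Tnk, ih (by omega : n < k), ih (by omega : n < k + 1), mul_zero, add_zero]

theorem sum_mul_Tnk_succ {R : Type*} [CommSemiring R] (m c n : ℕ) (f : ℕ → R) :
    ∑ k ∈ range (n + 2), f k * Tnk m c (n + 1) k =
      ∑ k ∈ range (n + 1), (f (k + 1) + (m * k + c) * f k) * Tnk m c n k := by
  have shift : ∑ k ∈ range (n + 1), (m * k + c) * f k * (Tnk m c n k : R) =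
      ∑ k ∈ range (n + 1), (m * (k + 1) + c) * f (k + 1) * (Tnk m c n (k + 1) : R) +
        c * f 0 * Tnk m c n 0 := by
    have extend := sum_range_succ (fun k : ℕ => (m * k + c) * f k * (Tnk m c n k : R)) (n + 1)
    rw [Tnk_eq_zero_of_lt m c n.lt_succ_self, Nat.cast_zero, mul_zero, add_zero] at extend
    rw [← extend, sum_range_succ']
    simp
  rw [sum_range_succ']
  simp only [add_mul (f _), sum_add_distrib]
  rw [shift, ← add_assoc, ← sum_add_distrib]
  congr 1
  · refine sum_congr rfl fun k _ => ?_
    simp only [Tnk, Nat.cast_add, Nat.cast_mul, Nat.cast_one]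
    ring
  · simp only [Tnk, Nat.cast_mul]
    ring

theorem Ttot_succ (m c n : ℕ) :
    Ttot m c (n + 1) = ∑ k ∈ range (n + 1), (m * k + c + 1) * Tnk m c n k := by
  have h := sum_mul_Tnk_succ m c n (fun _ => 1)
  simp only [Nat.cast_id, one_mul, mul_one] at h
  rw [Ttot, h]
  exact sum_congr rfl fun k _ => by ring

theorem Ttot_add_two (m c n : ℕ) :
    Ttot m c (n + 2) = ∑ k ∈ range (n + 1), ((m * k + c + 1) ^ 2 + m) * Tnk m c n k := by
  have h := sum_mul_Tnk_succ m c n (fun k => m * k + c + 1)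
  simp only [Nat.cast_id] at h
  rw [Ttot_succ, h]
  exact sum_congr rfl fun k _ => by ring

theorem Ttot_pos (m : ℕ) {c : ℕ} (hc : 0 < c) (n : ℕ) : 0 < Ttot m c n := by
  have Tnk_zero_pos : 0 < Tnk m c n 0 := by
    induction n with
    | zero => exact one_pos
    | succ n ih => exact mul_pos hc ih
  exact sum_pos' (fun _ _ => Nat.zero_le _) ⟨0, by simp, Tnk_zero_pos⟩

theorem Vn_eq_Ttot_ratios {m c : ℕ} (hm : 0 < m) (hc : 0 < c) (n : ℕ) :
    Vn m c n = ((Ttot m c (n + 2) : ℝ) / Ttot m c n -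
      ((Ttot m c (n + 1) : ℝ) / Ttot m c n) ^ 2) / m ^ 2 - 1 / m := by
  have hT : (Ttot m c n : ℝ) ≠ 0 := by exact_mod_cast (Ttot_pos m hc n).ne'
  have hm' : (m : ℝ) ≠ 0 := by exact_mod_cast hm.ne'
  set S₁ : ℝ := ∑ k ∈ range (n + 1), (k : ℝ) * Tnk m c n k with hS₁
  set S₂ : ℝ := ∑ k ∈ range (n + 1), (k : ℝ) ^ 2 * Tnk m c n k with hS₂
  have T_succ : (Ttot m c (n + 1) : ℝ) = m * S₁ + (c + 1) * Ttot m c n := by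
    rw [Ttot_succ, Ttot, hS₁]
    push_cast
    rw [mul_sum, mul_sum, ← sum_add_distrib]
    exact sum_congr rfl fun k _ => by ring
  have T_add_two : (Ttot m c (n + 2) : ℝ) =
      m ^ 2 * S₂ + 2 * m * (c + 1) * S₁ + ((c + 1) ^ 2 + m) * Ttot m c n := by
    rw [Ttot_add_two, Ttot, hS₁, hS₂]
    push_cast
    rw [mul_sum, mul_sum, mul_sum, ← sum_add_distrib, ← sum_add_distrib]
    exact sum_congr rfl fun k _ => by ring
  rw [Vn, En, ← hS₁, ← hS₂, T_succ, T_add_two]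
  field_simp
  ring

theorem pow_eq_sum_descFactorial_mul_Tnk (m c n j : ℕ) :
    (m * j + c) ^ n = ∑ k ∈ range (n + 1), m ^ k * j.descFactorial k * Tnk m c n k := by
  induction n with
  | zero => simp [Tnk]
  | succ n ih =>
    have h := sum_mul_Tnk_succ m c n (fun k => m ^ k * j.descFactorial k)
    simp only [Nat.cast_id] at h
    rw [h, pow_succ, ih, sum_mul]
    refine sum_congr rfl fun k _ => ?_
    rcases le_or_gt k j with hkj | hjk
    · obtain ⟨i, rfl⟩ := Nat.exists_eq_add_of_le hkj
      rw [Nat.descFactorial_succ, Nat.add_sub_cancel_left]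
      ring
    · simp [Nat.descFactorial_of_lt hjk]

theorem hasSum_descFactorial_mul_pow_div_factorial (k : ℕ) (x : ℝ) :
    HasSum (fun j : ℕ => j.descFactorial k * (x ^ j / j.factorial)) (x ^ k * Real.exp x) := by
  have vanish : ∑ j ∈ range k, (j.descFactorial k : ℝ) * (x ^ j / j.factorial) = 0 :=
    sum_eq_zero fun j hj => by simp [Nat.descFactorial_of_lt (mem_range.1 hj)]
  rw [← hasSum_nat_add_iff' k, vanish, sub_zero, Real.exp_eq_exp_ℝ]
  refine ((NormedSpace.expSeries_div_hasSum_exp x).mul_left (x ^ k)).congr_fun fun j => ?_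
  have hfact : ((j + k).factorial : ℝ) = j.factorial * (j + k).descFactorial k := by
    rw [← Nat.factorial_mul_descFactorial (Nat.le_add_left k j), Nat.add_sub_cancel]
    push_cast
    rfl
  have hdesc : ((j + k).descFactorial k : ℝ) ≠ 0 :=
    right_ne_zero_of_mul (hfact ▸ Nat.cast_ne_zero.2 (Nat.factorial_ne_zero _))
  rw [hfact, pow_add]
  field_simp

/-- The weight of `j` in Dobiński's formula for `T_n`. After normalization these weights form the
law of a random variable `J` such that `m * J + c` has the ratios `T_{n+1} / T_n` and
`T_{n+2} / T_n` as first two moments. -/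
noncomputable def dobinskiWeight (m c : ℝ) (n j : ℕ) : ℝ :=
  (m * j + c) ^ n / (m ^ j * j.factorial)

theorem dobinskiWeight_pos {m c : ℝ} (hm : 0 < m) (hc : 0 < c) (n j : ℕ) :
    0 < dobinskiWeight m c n j := by
  unfold dobinskiWeight
  positivity

theorem dobinskiWeight_succ (m c : ℝ) (n j : ℕ) :
    dobinskiWeight m c (n + 1) j = (m * j + c) * dobinskiWeight m c n j := by
  rw [dobinskiWeight, dobinskiWeight, pow_succ']
  ring

theorem hasSum_dobinskiWeight {m : ℕ} (hm : 0 < m) (c n : ℕ) :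
    HasSum (dobinskiWeight m c n) (Real.exp (1 / m) * Ttot m c n) := by
  have : (m : ℝ) ≠ 0 := by exact_mod_cast hm.ne'
  have terms : dobinskiWeight m c n = fun j : ℕ => ∑ k ∈ range (n + 1),
      (m : ℝ) ^ k * Tnk m c n k * (j.descFactorial k * ((1 / (m : ℝ)) ^ j / j.factorial)) := by
    funext j
    have hpow : (m * j + c : ℝ) ^ n =
        ∑ k ∈ range (n + 1), (m : ℝ) ^ k * j.descFactorial k * Tnk m c n k := by
      exact_mod_cast pow_eq_sum_descFactorial_mul_Tnk m c n j
    rw [dobinskiWeight, hpow, sum_div]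
    refine sum_congr rfl fun k _ => ?_
    rw [one_div, inv_pow]
    field_simp
  have total : Real.exp (1 / m) * Ttot m c n = ∑ k ∈ range (n + 1),
      (m : ℝ) ^ k * Tnk m c n k * ((1 / (m : ℝ)) ^ k * Real.exp (1 / m)) := by
    rw [Ttot, Nat.cast_sum, mul_sum]
    refine sum_congr rfl fun k _ => ?_
    rw [one_div, inv_pow]
    field_simp
  rw [terms, total]
  exact hasSum_sum fun k _ =>
    (hasSum_descFactorial_mul_pow_div_factorial k (1 / (m : ℝ))).mul_left _

end DobinskiFormula

section StepExtension

open MeasureTheory Set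

/-- The step function on `ℝ` which takes the value `f j` on `[j, j + 1)` and vanishes on the
negative half-line; it turns sums over `ℕ` into integrals. -/
noncomputable def stepExtension (f : ℕ → ℝ) (y : ℝ) : ℝ :=
  if 0 ≤ y then f ⌊y⌋₊ else 0

theorem measurable_stepExtension (f : ℕ → ℝ) : Measurable (stepExtension f) :=
  Measurable.ite measurableSet_Ici ((measurable_from_nat (f := f)).comp Nat.measurable_floor)
    measurable_const

theorem stepExtension_of_mem_Ico (f : ℕ → ℝ) {j : ℕ} {y : ℝ} (hy : y ∈ Ico (j : ℝ) (j + 1)) :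
    stepExtension f y = f j := by
  rw [stepExtension, if_pos ((Nat.cast_nonneg j).trans hy.1), Nat.floor_eq_on_Ico j y hy]

theorem iUnion_Ico_natCast : ⋃ j : ℕ, Ico (j : ℝ) (j + 1) = Ici 0 := by
  ext y
  simp only [mem_iUnion, mem_Ico, mem_Ici]
  exact ⟨fun ⟨j, hj, _⟩ => (Nat.cast_nonneg j).trans hj,
    fun hy => ⟨⌊y⌋₊, Nat.floor_le hy, Nat.lt_floor_add_one y⟩⟩

theorem hasSum_integral_stepExtension {f : ℕ → ℝ} (hf : Integrable (stepExtension f)) :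
    HasSum f (∫ y, stepExtension f y) := by
  have disjoint : Pairwise (Function.onFun Disjoint fun j : ℕ => Ico (j : ℝ) (j + 1)) := by
    intro i j hij
    simpa using pairwise_disjoint_Ico_intCast ℝ (Nat.cast_injective.ne hij)
  have hsum := hasSum_integral_iUnion (fun _ => measurableSet_Ico) disjoint hf.integrableOn
  have support : ∀ y, y ∉ Ici 0 → stepExtension f y = 0 := fun _ hy => if_neg hy
  rw [iUnion_Ico_natCast, setIntegral_eq_integral_of_forall_compl_eq_zero support] at hsum
  refine hsum.congr_fun fun j => ?_
  rw [setIntegral_congr_fun measurableSet_Ico fun y => stepExtension_of_mem_Ico f]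
  simp

theorem hasSum_of_integrable_stepExtension_affine {f : ℕ → ℝ} {s : ℝ} (hs : 0 < s) (a : ℝ)
    (hf : Integrable fun t => stepExtension f (a + s * t)) :
    HasSum f (s * ∫ t, stepExtension f (a + s * t)) := by
  have integrable : Integrable (stepExtension f) := by
    rw [integrable_comp_mul_left_iff (fun y => stepExtension f (a + y)) hs.ne'] at hf
    simpa using hf.comp_add_left (-a)
  rw [Measure.integral_comp_mul_left (fun y => stepExtension f (a + y)),
    integral_add_left_eq_self (stepExtension f), abs_of_pos (inv_pos.2 hs), smul_eq_mul,
    mul_inv_cancel_left₀ hs.ne']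
  exact hasSum_integral_stepExtension integrable

end StepExtension

section LogConcaveWeights

open MeasureTheory Set Topology

theorem le_tangent_of_antitone_increments {L : ℕ → ℝ} (hL : Antitone fun j => L (j + 1) - L j)
    (k p : ℕ) : L k ≤ L p + (L (p + 1) - L p) * (k - p) := by
  rcases le_total p k with hpk | hkp
  · induction k, hpk using Nat.le_induction with
    | base => simp
    | succ k hpk ih =>
      have := hL hpk
      push_cast
      linarith
  · induction hkp using Nat.decreasingInduction with
    | self => simp
    | of_succ k hkp ih =>
      have := hL hkp.le
      push_cast at ih
      linarith

/-- The logarithms of the ratios of consecutive terms of `u`; a positive `u` is log-concave if and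
only if they decrease. -/
noncomputable def logRatio (u : ℕ → ℝ) (j : ℕ) : ℝ :=
  Real.log (u (j + 1)) - Real.log (u j)

/-- Positive log-concave weights `w i` on `ℕ` which, on the scale `s i` around the centre `a i`,
look like a Gaussian density: at `a i + s i * x` the logarithmic slope in the variable `x` is
`-x + o(1)`, locally uniformly in `x`. -/
structure IsGaussianScaling {ι : Type*} (l : Filter ι) (w : ι → ℕ → ℝ) (a s : ι → ℝ) : Prop where
  pos : ∀ i j, 0 < w i j
  antitone_logRatio : ∀ i, Antitone (logRatio (w i))
  tendsto_scale : Tendsto s l atTop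
  tendsto_centre_div_scale : Tendsto (fun i => a i / s i) l atTop
  logRatio_approx : ∀ R ε : ℝ, 0 < ε → ∀ᶠ i in l, ∀ j : ℕ, |j - a i| ≤ R * s i →
    |s i * logRatio (w i) j + (j - a i) / s i| ≤ ε

theorem abs_floor_affine_sub_le {a s t : ℝ} (hs : 0 < s) (hat : 0 ≤ a + s * t) :
    |(⌊a + s * t⌋₊ - a) / s - t| ≤ s⁻¹ := by
  have rescale : (⌊a + s * t⌋₊ - a) / s - t = (⌊a + s * t⌋₊ - (a + s * t)) / s := by
    field_simp
    ring
  rw [rescale, abs_div, abs_of_pos hs, ← one_div]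
  gcongr
  exact Nat.abs_floor_sub_le hat

-- The sequence `log u + ((· - a) / s) ^ 2 / 2` has increments of size `o(1 / s)` on the window,
-- which contains `O(s)` integers.
theorem abs_log_sub_log_add_sq_le {u : ℕ → ℝ} {a s R ε : ℝ} (hs : 0 < s)
    (hu : ∀ p : ℕ, |p - a| ≤ R * s → |s * logRatio u p + (p - a) / s| ≤ ε) {j k : ℕ}
    (hj : |j - a| ≤ R * s) (hk : |k - a| ≤ R * s) :
    |Real.log (u k) - Real.log (u j) + (((k - a) / s) ^ 2 - ((j - a) / s) ^ 2) / 2| ≤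
      2 * R * (ε + 1 / s) := by
  wlog hjk : j ≤ k generalizing j k
  · rw [← abs_neg]
    convert this hk hj (le_of_not_ge hjk) using 2
    ring
  let D : ℕ → ℝ := fun p => Real.log (u p) + ((p - a) / s) ^ 2 / 2
  have increment : ∀ {p}, j ≤ p → p < k → dist (D p) (D (p + 1)) ≤ (ε + 1 / s) / s := by
    intro p hjp hpk
    have hjp' : (j : ℝ) ≤ p := by exact_mod_cast hjp
    have hpk' : (p : ℝ) ≤ k := by exact_mod_cast hpk.le
    have slope := hu p (abs_le.2 ⟨by linarith [abs_le.1 hj], by linarith [abs_le.1 hk]⟩)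
    have expand : D (p + 1) - D p = (s * logRatio u p + (p - a) / s + 1 / (2 * s)) / s := by
      simp only [D, logRatio]
      push_cast
      field_simp
      ring
    have half_le : 1 / (2 * s) ≤ 1 / s := one_div_le_one_div_of_le hs (by linarith)
    rw [dist_comm, Real.dist_eq, expand, abs_div, abs_of_pos hs]
    gcongr
    exact (abs_add_le _ _).trans
      (add_le_add slope ((abs_of_pos (by positivity : 0 < 1 / (2 * s))).trans_le half_le))
  have total := dist_le_Ico_sum_of_dist_le hjk increment
  rw [Finset.sum_const, Nat.card_Ico, nsmul_eq_mul, Nat.cast_sub hjk, dist_comm,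
    Real.dist_eq] at total
  have width : (k - j : ℝ) ≤ 2 * R * s := by linarith [abs_le.1 hj, abs_le.1 hk]
  have hε : 0 ≤ ε := (abs_nonneg _).trans (hu j hj)
  calc _ = |D k - D j| := by simp only [D]; ring_nf
    _ ≤ (k - j) * ((ε + 1 / s) / s) := total
    _ ≤ 2 * R * s * ((ε + 1 / s) / s) := by gcongr
    _ = 2 * R * (ε + 1 / s) := by field_simp

namespace IsGaussianScaling

variable {ι : Type*} {l : Filter ι} {w : ι → ℕ → ℝ} {a s : ι → ℝ}

theorem tendsto_mul_logRatio (h : IsGaussianScaling l w a s) {j : ι → ℕ} {x : ℝ}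
    (hj : Tendsto (fun i => (j i - a i) / s i) l (𝓝 x)) :
    Tendsto (fun i => s i * logRatio (w i) (j i)) l (𝓝 (-x)) := by
  suffices error : Tendsto (fun i => s i * logRatio (w i) (j i) + (j i - a i) / s i) l (𝓝 0) by
    simpa using error.sub hj
  refine Metric.tendsto_nhds.2 fun ε hε => ?_
  filter_upwards [h.logRatio_approx (|x| + 1) (ε / 2) (half_pos hε),
    h.tendsto_scale.eventually_gt_atTop 0,
    hj.abs.eventually_le_const (lt_add_one |x|)] with i approx hs bound
  rw [abs_div, abs_of_pos hs, div_le_iff₀ hs] at bound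
  rw [Real.dist_0_eq_abs]
  exact (approx _ bound).trans_lt (half_lt_self hε)

theorem tendsto_log_sub_log (h : IsGaussianScaling l w a s) {j k : ι → ℕ} {x y : ℝ}
    (hj : Tendsto (fun i => (j i - a i) / s i) l (𝓝 x))
    (hk : Tendsto (fun i => (k i - a i) / s i) l (𝓝 y)) :
    Tendsto (fun i => Real.log (w i (k i)) - Real.log (w i (j i))) l (𝓝 ((x ^ 2 - y ^ 2) / 2)) := by
  suffices error : Tendsto (fun i => Real.log (w i (k i)) - Real.log (w i (j i)) +
      (((k i - a i) / s i) ^ 2 - ((j i - a i) / s i) ^ 2) / 2) l (𝓝 0) by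
    convert error.sub (((hk.pow 2).sub (hj.pow 2)).div_const 2) using 2 <;> ring
  set R := |x| + |y| + 1
  have hR_pos : 0 < R := by positivity
  refine Metric.tendsto_nhds.2 fun δ hδ => ?_
  have in_window {p : ι → ℕ} {z : ℝ} (hz : |z| < R)
      (hp : Tendsto (fun i => (p i - a i) / s i) l (𝓝 z)) : ∀ᶠ i in l, |p i - a i| ≤ R * s i := by
    filter_upwards [h.tendsto_scale.eventually_gt_atTop 0, hp.abs.eventually_le_const hz]
      with i hs bound
    rwa [abs_div, abs_of_pos hs, div_le_iff₀ hs] at bound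
  filter_upwards [h.logRatio_approx R (δ / (8 * R)) (by positivity),
    h.tendsto_scale.eventually_gt_atTop (8 * R / δ),
    in_window (by linarith [abs_nonneg y]) hj, in_window (by linarith [abs_nonneg x]) hk]
    with i approx scale_large hj_window hk_window
  have hs : 0 < s i := lt_trans (by positivity) scale_large
  have inv_scale : 1 / s i ≤ δ / (8 * R) := by
    rw [div_le_div_iff₀ hs (by positivity)]
    rw [div_lt_iff₀ hδ] at scale_large
    linarith
  rw [Real.dist_0_eq_abs]
  calc _ ≤ 2 * R * (δ / (8 * R) + 1 / s i) :=
        abs_log_sub_log_add_sq_le hs approx hj_window hk_window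
    _ ≤ 2 * R * (δ / (8 * R) + δ / (8 * R)) := by gcongr
    _ = δ / 2 := by field_simp; norm_num
    _ < δ := half_lt_self hδ

theorem eventually_nonneg_affine (h : IsGaussianScaling l w a s) (t : ℝ) :
    ∀ᶠ i in l, 0 ≤ a i + s i * t := by
  filter_upwards [h.tendsto_scale.eventually_gt_atTop 0,
    h.tendsto_centre_div_scale.eventually_ge_atTop (-t)] with i hs ht
  rw [le_div_iff₀ hs] at ht
  linarith

theorem tendsto_floor_affine (h : IsGaussianScaling l w a s) (t : ℝ) :
    Tendsto (fun i => ((⌊a i + s i * t⌋₊ : ℝ) - a i) / s i) l (𝓝 t) := by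
  refine tendsto_iff_norm_sub_tendsto_zero.2 (squeeze_zero' (.of_forall fun _ => norm_nonneg _) ?_
    h.tendsto_scale.inv_tendsto_atTop)
  filter_upwards [h.tendsto_scale.eventually_gt_atTop 0, h.eventually_nonneg_affine t]
    with i hs nonneg
  rw [Pi.inv_apply, Real.norm_eq_abs]
  exact abs_floor_affine_sub_le hs nonneg

theorem tendsto_floor_centre (h : IsGaussianScaling l w a s) :
    Tendsto (fun i => ((⌊a i⌋₊ : ℝ) - a i) / s i) l (𝓝 0) := by
  simpa using h.tendsto_floor_affine 0

-- The tangent of `log w` at distance about `s` from the centre, on the side of `k`, has slope of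
-- order `1 / s` towards the centre.
theorem eventually_le_mul_exp_neg_abs_of_side (h : IsGaussianScaling l w a s) {σ : ℝ}
    (hσ : |σ| = 1) : ∀ᶠ i in l, ∀ k : ℕ, 0 ≤ σ * ((k - a i) / s i) →
      w i k ≤ w i ⌊a i⌋₊ * Real.exp (4 - |(k - a i) / s i| / 2) := by
  have hσ_sq : σ ^ 2 = 1 := by rw [← sq_abs, hσ, one_pow]
  have hp := h.tendsto_floor_affine σ
  have drop := h.tendsto_log_sub_log h.tendsto_floor_centre hp
  have distance := (hp.const_mul σ).eventually (Icc_mem_nhds (a := 0) (b := 2)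
    (by nlinarith) (by nlinarith))
  have slope := ((h.tendsto_mul_logRatio hp).const_mul σ).eventually
    (Icc_mem_nhds (a := -2) (b := -1 / 2) (by nlinarith) (by nlinarith))
  filter_upwards [h.tendsto_scale.eventually_gt_atTop 0,
    drop.eventually_le_const (by rw [hσ_sq]; norm_num : (0 ^ 2 - σ ^ 2) / 2 < 0), distance, slope]
    with i hs drop distance slope k side
  set p := ⌊a i + s i * σ⌋₊
  have tangent : Real.log (w i k) ≤ Real.log (w i p) +
      σ * (s i * logRatio (w i) p) * (σ * ((k - a i) / s i) - σ * ((p - a i) / s i)) := by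
    convert le_tangent_of_antitone_increments (L := fun j => Real.log (w i j))
      (h.antitone_logRatio i) k p using 2
    rw [logRatio]
    field_simp
    rw [hσ_sq]
    ring
  have side_eq : |(k - a i) / s i| = σ * ((k - a i) / s i) := by
    rw [← abs_of_nonneg side, abs_mul, hσ, one_mul]
  rw [← Real.log_le_log_iff (h.pos i k) (mul_pos (h.pos _ _) (Real.exp_pos _)),
    Real.log_mul (h.pos _ _).ne' (Real.exp_pos _).ne', Real.log_exp, side_eq]
  nlinarith [slope.1, slope.2, distance.1, distance.2]

theorem eventually_le_mul_exp_neg_abs (h : IsGaussianScaling l w a s) :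
    ∀ᶠ i in l, ∀ k : ℕ, w i k ≤ w i ⌊a i⌋₊ * Real.exp (4 - |(k - a i) / s i| / 2) := by
  filter_upwards [h.eventually_le_mul_exp_neg_abs_of_side (σ := 1) (by simp),
    h.eventually_le_mul_exp_neg_abs_of_side (σ := -1) (by simp)] with i right left k
  rcases le_total 0 ((k - a i) / s i) with hk | hk
  · exact right k (by linarith)
  · exact left k (by linarith)

end IsGaussianScaling

theorem integrable_pow_mul_exp_neg_abs_div_two (k : ℕ) :
    Integrable fun t : ℝ => (1 + |t|) ^ k * Real.exp (-|t| / 2) := by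
  have majorant : Integrable fun t : ℝ =>
      2 ^ (k + 2) * (k + 2).factorial * Real.exp (1 / 2) * (1 + ‖t‖) ^ (-2 : ℝ) :=
    (integrable_one_add_norm (by simp)).const_mul _
  refine majorant.mono' (by fun_prop) (.of_forall fun t => ?_)
  have key := Real.pow_div_factorial_le_exp ((1 + |t|) / 2) (by positivity) (k + 2)
  rw [div_pow, div_div, div_le_iff₀ (by positivity)] at key
  rw [Real.norm_of_nonneg (by positivity), Real.norm_eq_abs, Real.rpow_neg (by positivity),
    Real.rpow_two, neg_div, Real.exp_neg, ← div_eq_mul_inv, ← div_eq_mul_inv,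
    div_le_div_iff₀ (by positivity) (by positivity)]
  calc (1 + |t|) ^ k * (1 + |t|) ^ 2 = (1 + |t|) ^ (k + 2) := (pow_add _ _ _).symm
    _ ≤ Real.exp ((1 + |t|) / 2) * (2 ^ (k + 2) * (k + 2).factorial) := key
    _ = _ := by rw [add_div, Real.exp_add]; ring

/-- The `k`-th moment of `(J - a) / s`, where the law of the random variable `J` is proportional to
the weights `u` on `ℕ`. -/
noncomputable def normalizedMoment (u : ℕ → ℝ) (a s : ℝ) (k : ℕ) : ℝ :=
  (∑' j : ℕ, ((j - a) / s) ^ k * u j) / ∑' j : ℕ, u j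

/-- The summands of the `k`-th moment of the weights `u`, in units of the weight at the centre. -/
noncomputable def momentTerm (u : ℕ → ℝ) (a s : ℝ) (k j : ℕ) : ℝ :=
  ((j - a) / s) ^ k * (u j / u ⌊a⌋₊)

namespace IsGaussianScaling

variable {ι : Type*} {l : Filter ι} {w : ι → ℕ → ℝ} {a s : ι → ℝ}

theorem tendsto_stepExtension_momentTerm (h : IsGaussianScaling l w a s) (k : ℕ) (t : ℝ) :
    Tendsto (fun i => stepExtension (momentTerm (w i) (a i) (s i) k) (a i + s i * t)) l
      (𝓝 (t ^ k * Real.exp (-t ^ 2 / 2))) := by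
  have ratio := (Real.continuous_exp.tendsto _).comp
    (h.tendsto_log_sub_log h.tendsto_floor_centre (h.tendsto_floor_affine t))
  rw [zero_pow two_ne_zero, zero_sub] at ratio
  refine (((h.tendsto_floor_affine t).pow k).mul ratio).congr' ?_
  filter_upwards [h.eventually_nonneg_affine t] with i nonneg
  rw [stepExtension, if_pos nonneg, momentTerm, Function.comp_apply, Real.exp_sub,
    Real.exp_log (h.pos _ _), Real.exp_log (h.pos _ _)]

theorem eventually_stepExtension_momentTerm_le (h : IsGaussianScaling l w a s) (k : ℕ) :
    ∀ᶠ i in l, ∀ t, ‖stepExtension (momentTerm (w i) (a i) (s i) k) (a i + s i * t)‖ ≤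
      Real.exp 5 * ((1 + |t|) ^ k * Real.exp (-|t| / 2)) := by
  filter_upwards [h.tendsto_scale.eventually_ge_atTop 1, h.eventually_le_mul_exp_neg_abs]
    with i hs decay t
  rw [stepExtension]
  split_ifs with nonneg
  swap
  · rw [norm_zero]
    positivity
  set j := ⌊a i + s i * t⌋₊
  have close : |(j - a i) / s i - t| ≤ 1 :=
    (abs_floor_affine_sub_le (one_pos.trans_le hs) nonneg).trans (inv_le_one_of_one_le₀ hs)
  have upper : |(j - a i) / s i| ≤ 1 + |t| := by
    linarith [abs_sub_abs_le_abs_sub ((j - a i) / s i) t]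
  have lower : |t| - 1 ≤ |(j - a i) / s i| := by
    linarith [abs_sub_abs_le_abs_sub t ((j - a i) / s i), abs_sub_comm ((j - a i) / s i) t]
  have ratio_le : w i j / w i ⌊a i⌋₊ ≤ Real.exp (5 + -|t| / 2) := by
    rw [div_le_iff₀' (h.pos _ _)]
    refine (decay j).trans (mul_le_mul_of_nonneg_left (Real.exp_le_exp.2 ?_) (h.pos _ _).le)
    linarith
  have ratio_nonneg : 0 ≤ w i j / w i ⌊a i⌋₊ := (div_pos (h.pos _ _) (h.pos _ _)).le
  rw [momentTerm, norm_mul, norm_pow, Real.norm_eq_abs, Real.norm_of_nonneg ratio_nonneg]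
  calc _ ≤ (1 + |t|) ^ k * Real.exp (5 + -|t| / 2) := by gcongr
    _ = _ := by rw [Real.exp_add]; ring

theorem eventually_integrable_stepExtension_momentTerm (h : IsGaussianScaling l w a s) (k : ℕ) :
    ∀ᶠ i in l, Integrable fun t =>
      stepExtension (momentTerm (w i) (a i) (s i) k) (a i + s i * t) := by
  filter_upwards [h.eventually_stepExtension_momentTerm_le k] with i bound
  exact ((integrable_pow_mul_exp_neg_abs_div_two k).const_mul _).mono'
    ((measurable_stepExtension _).comp (by fun_prop)).aestronglyMeasurable (.of_forall bound)

theorem tendsto_integral_stepExtension_momentTerm [l.IsCountablyGenerated]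
    (h : IsGaussianScaling l w a s) (k : ℕ) :
    Tendsto (fun i => ∫ t, stepExtension (momentTerm (w i) (a i) (s i) k) (a i + s i * t)) l
      (𝓝 (∫ t, t ^ k * Real.exp (-t ^ 2 / 2))) :=
  tendsto_integral_filter_of_dominated_convergence _
    ((h.eventually_integrable_stepExtension_momentTerm k).mono
      fun _ => Integrable.aestronglyMeasurable)
    ((h.eventually_stepExtension_momentTerm_le k).mono fun _ bound => .of_forall bound)
    ((integrable_pow_mul_exp_neg_abs_div_two k).const_mul _)
    (.of_forall (h.tendsto_stepExtension_momentTerm k))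

theorem eventually_normalizedMoment_eq (h : IsGaussianScaling l w a s) (k : ℕ) :
    ∀ᶠ i in l, normalizedMoment (w i) (a i) (s i) k =
      (∫ t, stepExtension (momentTerm (w i) (a i) (s i) k) (a i + s i * t)) /
        ∫ t, stepExtension (momentTerm (w i) (a i) (s i) 0) (a i + s i * t) := by
  filter_upwards [h.tendsto_scale.eventually_gt_atTop 0,
    h.eventually_integrable_stepExtension_momentTerm k,
    h.eventually_integrable_stepExtension_momentTerm 0] with i hs integrable_k integrable_zero
  have sum_k := (hasSum_of_integrable_stepExtension_affine hs _ integrable_k).tsum_eq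
  have sum_zero := (hasSum_of_integrable_stepExtension_affine hs _ integrable_zero).tsum_eq
  simp only [momentTerm, ← mul_div_assoc, tsum_div_const, pow_zero, one_mul] at sum_k sum_zero
  have hw := (h.pos i ⌊a i⌋₊).ne'
  rw [div_eq_iff hw] at sum_k sum_zero
  rw [normalizedMoment, sum_k, sum_zero, mul_div_mul_right _ _ hw, mul_div_mul_left _ _ hs.ne']

end IsGaussianScaling

theorem integral_pow_mul_exp_neg_sq_div_two (k : ℕ) :
    ∫ t : ℝ, t ^ k * Real.exp (-t ^ 2 / 2) =
      √(2 * Real.pi) * ∫ t, t ^ k ∂ProbabilityTheory.gaussianReal 0 1 := by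
  rw [ProbabilityTheory.integral_gaussianReal_eq_integral_smul one_ne_zero,
    ← integral_const_mul]
  refine integral_congr_ae (.of_forall fun t => ?_)
  simp only [ProbabilityTheory.gaussianPDFReal_def, NNReal.coe_one, mul_one, sub_zero, smul_eq_mul]
  field_simp

theorem IsGaussianScaling.tendsto_normalizedMoment {ι : Type*} {l : Filter ι}
    [l.IsCountablyGenerated] {w : ι → ℕ → ℝ} {a s : ι → ℝ}
    (h : IsGaussianScaling l w a s) (k : ℕ) :
    Tendsto (fun i => normalizedMoment (w i) (a i) (s i) k) l
      (𝓝 (∫ t, t ^ k ∂ProbabilityTheory.gaussianReal 0 1)) := by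
  have hk := h.tendsto_integral_stepExtension_momentTerm k
  have h0 := h.tendsto_integral_stepExtension_momentTerm 0
  rw [integral_pow_mul_exp_neg_sq_div_two] at hk h0
  have total : ∫ t : ℝ, t ^ 0 ∂ProbabilityTheory.gaussianReal 0 1 = 1 := by simp
  rw [total, mul_one] at h0
  have hpi : √(2 * Real.pi) ≠ 0 := by positivity
  have quotient := hk.div h0 hpi
  rw [mul_div_cancel_left₀ _ hpi] at quotient
  exact quotient.congr' ((h.eventually_normalizedMoment_eq k).mono fun _ => Eq.symm)

theorem IsGaussianScaling.tendsto_normalizedVariance {ι : Type*} {l : Filter ι}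
    [l.IsCountablyGenerated] {w : ι → ℕ → ℝ} {a s : ι → ℝ} (h : IsGaussianScaling l w a s) :
    Tendsto (fun i => normalizedMoment (w i) (a i) (s i) 2 -
      normalizedMoment (w i) (a i) (s i) 1 ^ 2) l (𝓝 1) := by
  have variance := ProbabilityTheory.variance_eq_sub
    (ProbabilityTheory.memLp_id_gaussianReal (μ := 0) (v := 1) 2)
  rw [ProbabilityTheory.variance_id_gaussianReal] at variance
  have limit := (h.tendsto_normalizedMoment 2).sub ((h.tendsto_normalizedMoment 1).pow 2)
  convert limit
  simpa using variance

end LogConcaveWeights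

theorem Vn_eq_normalizedMoment {m c : ℕ} (hm : 0 < m) (hc : 0 < c) (n : ℕ) (a : ℝ) {s : ℝ}
    (hs : s ≠ 0) :
    Vn m c n = s ^ 2 * (normalizedMoment (dobinskiWeight m c n) a s 2 -
      normalizedMoment (dobinskiWeight m c n) a s 1 ^ 2) - 1 / m := by
  have hT : (Ttot m c n : ℝ) ≠ 0 := by exact_mod_cast (Ttot_pos m hc n).ne'
  have hm' : (m : ℝ) ≠ 0 := by exact_mod_cast hm.ne'
  set e := Real.exp (1 / m) with he
  have he' : e ≠ 0 := (Real.exp_pos _).ne'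
  set d : ℝ := m * a + c with hd
  have sum_zero := hasSum_dobinskiWeight hm c n
  have sum_one := hasSum_dobinskiWeight hm c (n + 1)
  have sum_two := hasSum_dobinskiWeight hm c (n + 2)
  rw [← he] at sum_zero sum_one sum_two
  have first : HasSum (fun j : ℕ => ((j - a) / s) ^ 1 * dobinskiWeight m c n j)
      ((e * Ttot m c (n + 1) - d * (e * Ttot m c n)) / (m * s)) := by
    refine ((sum_one.sub (sum_zero.mul_left d)).div_const (m * s)).congr_fun fun j => ?_
    rw [hd, dobinskiWeight_succ]
    field_simp
    ring
  have second : HasSum (fun j : ℕ => ((j - a) / s) ^ 2 * dobinskiWeight m c n j)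
      ((e * Ttot m c (n + 2) - 2 * d * (e * Ttot m c (n + 1)) + d ^ 2 * (e * Ttot m c n)) /
        (m * s) ^ 2) := by
    refine (((sum_two.sub (sum_one.mul_left (2 * d))).add (sum_zero.mul_left (d ^ 2))).div_const
      ((m * s) ^ 2)).congr_fun fun j => ?_
    rw [hd, dobinskiWeight_succ m c (n + 1), dobinskiWeight_succ]
    field_simp
    ring
  rw [Vn_eq_Ttot_ratios hm hc, normalizedMoment, normalizedMoment, first.tsum_eq, second.tsum_eq,
    sum_zero.tsum_eq]
  field_simp
  ring

section SaddlePoint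

open Set Topology Asymptotics

/-- The function on `[0, ∞)` whose values at the integers are the logarithms of the ratios of
consecutive Dobiński weights; the exponent `n` is replaced by a real number `ν`. -/
noncomputable def dobinskiSlope (m c ν x : ℝ) : ℝ :=
  ν * (Real.log (m * (x + 1) + c) - Real.log (m * x + c)) - Real.log (m * (x + 1))

/-- The negative of the derivative of `dobinskiSlope` in the variable `x`. -/
noncomputable def dobinskiCurvature (m c ν x : ℝ) : ℝ :=
  ν * (m / (m * x + c)) * (m / (m * (x + 1) + c)) + (x + 1)⁻¹

variable {m c : ℝ}

theorem logRatio_dobinskiWeight (hm : 0 < m) (hc : 0 < c) (n j : ℕ) :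
    logRatio (dobinskiWeight m c n) j = dobinskiSlope m c n j := by
  have ratio : dobinskiWeight m c n (j + 1) =
      dobinskiWeight m c n j * ((m * (j + 1) + c) ^ n / (m * j + c) ^ n / (m * (j + 1))) := by
    rw [dobinskiWeight, dobinskiWeight, Nat.factorial_succ]
    push_cast
    field_simp
    ring
  rw [logRatio, ratio, Real.log_mul (dobinskiWeight_pos hm hc n j).ne' (by positivity),
    Real.log_div (by positivity) (by positivity), Real.log_div (by positivity) (by positivity),
    Real.log_pow, Real.log_pow, dobinskiSlope]
  ring

theorem hasDerivAt_dobinskiSlope (hm : 0 < m) (hc : 0 < c) (ν : ℝ) {x : ℝ} (hx : 0 ≤ x) :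
    HasDerivAt (dobinskiSlope m c ν) (-dobinskiCurvature m c ν x) x := by
  have affine (d : ℝ) : HasDerivAt (fun y => m * y + d) m x := by
    simpa using ((hasDerivAt_id x).const_mul m).add_const d
  have slope : dobinskiSlope m c ν = fun y =>
      ν * (Real.log (m * y + (m + c)) - Real.log (m * y + c)) - Real.log (m * y + m) := by
    funext y
    rw [dobinskiSlope, mul_add_one, add_assoc]
  rw [slope]
  refine (((((affine (m + c)).log (by positivity)).sub ((affine c).log (by positivity))).const_mul
    ν).sub ((affine m).log (by positivity))).congr_deriv ?_
  rw [dobinskiCurvature]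
  field_simp
  ring

theorem dobinskiCurvature_nonneg (hm : 0 < m) (hc : 0 < c) {ν : ℝ} (hν : 0 ≤ ν) {x : ℝ}
    (hx : 0 ≤ x) : 0 ≤ dobinskiCurvature m c ν x := by
  unfold dobinskiCurvature
  positivity

theorem antitoneOn_dobinskiCurvature (hm : 0 < m) (hc : 0 < c) {ν : ℝ} (hν : 0 ≤ ν) :
    AntitoneOn (dobinskiCurvature m c ν) (Ici 0) := by
  intro x (hx : 0 ≤ x) y (hy : 0 ≤ y) hxy
  unfold dobinskiCurvature
  gcongr

theorem antitoneOn_dobinskiSlope (hm : 0 < m) (hc : 0 < c) {ν : ℝ} (hν : 0 ≤ ν) :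
    AntitoneOn (dobinskiSlope m c ν) (Ici 0) := by
  refine antitoneOn_of_hasDerivWithinAt_nonpos (convex_Ici 0)
    (fun x hx => (hasDerivAt_dobinskiSlope hm hc ν hx).continuousAt.continuousWithinAt)
    (fun x hx => (hasDerivAt_dobinskiSlope hm hc ν (interior_subset hx)).hasDerivWithinAt)
    fun x hx => neg_nonpos.2 (dobinskiCurvature_nonneg hm hc hν (interior_subset hx))

theorem isEquivalent_log_mul_add_one (hm : 0 < m) :
    (fun x => Real.log (m * (x + 1))) ~[atTop] Real.log := by
  have difference : Tendsto (fun x => Real.log (m * (x + 1)) - Real.log x) atTop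
      (𝓝 (Real.log m)) := by
    have shift := (Real.tendsto_log_comp_add_sub_log 1).const_add (Real.log m)
    rw [add_zero] at shift
    refine shift.congr' ?_
    filter_upwards [eventually_gt_atTop 0] with x hx
    rw [Real.log_mul hm.ne' (by positivity)]
    ring
  exact (difference.isBigO_one ℝ).trans_isLittleO
    (isLittleO_const_left.2 <| .inr <| tendsto_norm_atTop_atTop.comp Real.tendsto_log_atTop)

theorem isEquivalent_log_increment (hm : 0 < m) (c : ℝ) :
    (fun x => Real.log (m * (x + 1) + c) - Real.log (m * x + c)) ~[atTop] fun x => x⁻¹ := by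
  have base : (fun y : ℝ => Real.log (1 + 1 / y)) ~[atTop] fun y => y⁻¹ := by
    refine (isEquivalent_iff_tendsto_one
      ((eventually_ne_atTop 0).mono fun y => inv_ne_zero)).2 ?_
    refine (Real.tendsto_mul_log_one_add_div_atTop 1).congr fun y => ?_
    rw [Pi.div_apply, div_inv_eq_mul, mul_comm]
  have shift : (fun x => x + c / m) ~[atTop] fun x => x :=
    IsEquivalent.refl.add_isLittleO (isLittleO_const_id_atTop _)
  refine ((base.comp_tendsto (tendsto_atTop_add_const_right atTop (c / m) tendsto_id)).congr_left
    ?_).trans shift.inv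
  filter_upwards [eventually_gt_atTop (-(c / m))] with x hx
  have pos : 0 < x + c / m := by linarith
  have factor (y : ℝ) : m * y + c = m * (y + c / m) := by field_simp
  simp only [Function.comp_apply, id]
  rw [factor, factor, Real.log_mul hm.ne' (by linarith), Real.log_mul hm.ne' pos.ne',
    add_sub_add_left_eq_sub, ← Real.log_div (by linarith) pos.ne',
    one_add_div pos.ne', add_right_comm]

theorem isEquivalent_mul_log_of_dobinskiSlope_eq_zero {ι : Type*} {l : Filter ι} {ν a : ι → ℝ}
    (hm : 0 < m) (ha : Tendsto a l atTop)
    (hν : ∀ᶠ i in l, dobinskiSlope m c (ν i) (a i) = 0) :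
    ν ~[l] fun i => a i * Real.log (a i) := by
  have log_equiv := isEquivalent_log_mul_add_one hm
  have ratio := (log_equiv.comp_tendsto ha).div
    ((isEquivalent_log_increment hm c).comp_tendsto ha)
  refine (ratio.congr_left ?_).congr_right (.of_forall fun i => ?_)
  · have log_pos := ha.eventually
      ((log_equiv.symm.tendsto_atTop Real.tendsto_log_atTop).eventually_gt_atTop 0)
    filter_upwards [hν, log_pos] with i root log_pos
    rw [dobinskiSlope, sub_eq_zero] at root
    simp only [Pi.div_apply, Function.comp_apply]
    rw [← root] at log_pos ⊢
    exact mul_div_cancel_right₀ _ (right_ne_zero_of_mul log_pos.ne')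
  · simp only [Pi.div_apply, Function.comp_apply]
    rw [div_inv_eq_mul, mul_comm]

-- At a saddle point `a` the first summand of the curvature is about `ν / a ^ 2 ~ log a / a`, which
-- dominates the second one.
theorem isEquivalent_dobinskiCurvature {ι : Type*} {l : Filter ι} {ν a y : ι → ℝ} (hm : 0 < m)
    (c : ℝ) (ha : Tendsto a l atTop) (hν : ν ~[l] fun i => a i * Real.log (a i)) (hy : y ~[l] a) :
    (fun i => dobinskiCurvature m c (ν i) (y i)) ~[l] fun i => Real.log (a i) / a i := by
  have shift (d : ℝ) : (fun i => y i + d) ~[l] a :=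
    hy.add_isLittleO (isLittleO_const_left.2 (.inr (tendsto_norm_atTop_atTop.comp ha)))
  have factor (d : ℝ) : (fun i => m / (m * y i + d)) ~[l] fun i => (a i)⁻¹ := by
    refine (shift (d / m)).inv.congr_left (.of_forall fun i => ?_)
    rw [Pi.inv_apply, add_div' _ _ _ hm.ne', inv_div, mul_comm]
  have factor_succ : (fun i => m / (m * (y i + 1) + c)) ~[l] fun i => (a i)⁻¹ := by
    simpa only [mul_add_one, add_assoc] using factor (m + c)
  have main : (fun i => ν i * (m / (m * y i + c)) * (m / (m * (y i + 1) + c))) ~[l]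
      fun i => Real.log (a i) / a i := by
    refine ((hν.mul (factor c)).mul factor_succ).congr_right ?_
    filter_upwards [ha.eventually_ne_atTop 0] with i hi
    simp only [Pi.mul_apply]
    field_simp
  have inv_isLittleO : (fun i => (a i)⁻¹) =o[l] fun i => Real.log (a i) / a i := by
    simpa [div_eq_mul_inv, Function.comp_def] using (Real.isLittleO_const_log_atTop
      (c := 1)).comp_tendsto ha |>.mul_isBigO (isBigO_refl (fun i => (a i)⁻¹) l)
  exact main.add_isLittleO ((shift 1).inv.trans_isLittleO inv_isLittleO)

theorem tendsto_div_log_pow_atTop (k : ℕ) :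
    Tendsto (fun x => x / Real.log x ^ k) atTop atTop := by
  have inverse := Real.tendsto_pow_log_div_mul_add_atTop 1 0 k one_ne_zero
  have pos : ∀ᶠ x : ℝ in atTop, 0 < Real.log x ^ k / (1 * x + 0) := by
    filter_upwards [eventually_gt_atTop 1] with x hx
    have := Real.log_pos hx
    positivity
  refine (tendsto_nhdsWithin_iff.2 ⟨inverse, pos⟩).inv_tendsto_nhdsGT_zero.congr fun x => ?_
  rw [Pi.inv_apply, inv_div, one_mul, add_zero]

/-- The standard deviation of the Gaussian profile of the Dobiński weights around a zero `a` of
`dobinskiSlope`. -/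
noncomputable def saddleScale (a : ℝ) : ℝ :=
  √(a / Real.log a)

theorem sq_saddleScale {a : ℝ} (ha : 1 < a) : saddleScale a ^ 2 = a / Real.log a :=
  Real.sq_sqrt (div_nonneg (zero_le_one.trans ha.le) (Real.log_pos ha).le)

theorem tendsto_saddleScale : Tendsto saddleScale atTop atTop :=
  Real.tendsto_sqrt_atTop.comp (by simpa using tendsto_div_log_pow_atTop 1)

theorem tendsto_div_saddleScale : Tendsto (fun a => a / saddleScale a) atTop atTop := by
  refine (tendsto_saddleScale.atTop_mul_atTop₀ Real.tendsto_log_atTop).congr' ?_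
  filter_upwards [eventually_gt_atTop 1, tendsto_saddleScale.eventually_ne_atTop 0] with a ha hs
  rw [eq_div_iff hs, mul_right_comm, ← pow_two, sq_saddleScale ha,
    div_mul_cancel₀ _ (Real.log_pos ha).ne']

variable {ι : Type*} {l : Filter ι} {ν a : ι → ℝ}

theorem isEquivalent_add_mul_saddleScale (ha : Tendsto a l atTop) (R : ℝ) :
    (fun i => a i + R * saddleScale (a i)) ~[l] a := by
  have negligible : (fun x => R * saddleScale x) =o[atTop] fun x => x := by
    refine (isLittleO_of_tendsto' ?_ ?_).const_mul_left R
    · filter_upwards [eventually_ne_atTop 0] with x hx h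
      exact absurd h hx
    · refine tendsto_div_saddleScale.inv_tendsto_atTop.congr fun x => ?_
      rw [Pi.inv_apply, inv_div]
  exact IsEquivalent.refl.add_isLittleO (negligible.comp_tendsto ha)

theorem tendsto_sq_saddleScale_mul_dobinskiCurvature (hm : 0 < m) (ha : Tendsto a l atTop)
    (hν : ∀ᶠ i in l, dobinskiSlope m c (ν i) (a i) = 0) (R : ℝ) :
    Tendsto (fun i => saddleScale (a i) ^ 2 *
      dobinskiCurvature m c (ν i) (a i + R * saddleScale (a i))) l (𝓝 1) := by
  have curvature := isEquivalent_dobinskiCurvature hm c ha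
    (isEquivalent_mul_log_of_dobinskiSlope_eq_zero hm ha hν) (isEquivalent_add_mul_saddleScale ha R)
  have large := ha.eventually_gt_atTop 1
  refine ((isEquivalent_iff_tendsto_one ?_).1 curvature).congr' ?_
  · filter_upwards [large] with i hi
    exact (div_pos (Real.log_pos hi) (one_pos.trans hi)).ne'
  · filter_upwards [large] with i hi
    rw [sq_saddleScale hi, Pi.div_apply, div_eq_mul_inv, inv_div, mul_comm]

-- Mean value inequality for `y ↦ s ^ 2 * dobinskiSlope m c ν y + (y - a)`, which vanishes at `a`.
theorem abs_sq_mul_dobinskiSlope_add_sub_le (hm : 0 < m) (hc : 0 < c) {ν a s r η : ℝ}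
    (hν : 0 ≤ ν) (root : dobinskiSlope m c ν a = 0) (hr : r ≤ a)
    (left : |s ^ 2 * dobinskiCurvature m c ν (a - r) - 1| ≤ η)
    (right : |s ^ 2 * dobinskiCurvature m c ν (a + r) - 1| ≤ η) {y : ℝ} (hy : |y - a| ≤ r) :
    |s ^ 2 * dobinskiSlope m c ν y + (y - a)| ≤ η * r := by
  have hr_nonneg : 0 ≤ r := (abs_nonneg _).trans hy
  have in_domain {x : ℝ} (hx : x ∈ Icc (a - r) (a + r)) : 0 ≤ x := by linarith [hx.1]
  have deriv_le : ∀ x ∈ Icc (a - r) (a + r), ‖s ^ 2 * -dobinskiCurvature m c ν x + 1‖ ≤ η := by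
    intro x hx
    have anti := antitoneOn_dobinskiCurvature hm hc hν
    have lower := mul_le_mul_of_nonneg_left
      (anti (in_domain hx) (in_domain ⟨by linarith, le_rfl⟩) hx.2) (sq_nonneg s)
    have upper := mul_le_mul_of_nonneg_left
      (anti (in_domain ⟨le_rfl, by linarith⟩) (in_domain hx) hx.1) (sq_nonneg s)
    rw [Real.norm_eq_abs, abs_le]
    constructor <;> linarith [abs_le.1 left, abs_le.1 right]
  have mean_value := (convex_Icc (a - r) (a + r)).norm_image_sub_le_of_norm_hasDerivWithin_le
    (fun x hx => (((hasDerivAt_dobinskiSlope hm hc ν (in_domain hx)).const_mul (s ^ 2)).add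
      ((hasDerivAt_id x).sub_const a)).hasDerivWithinAt) deriv_le
    (show a ∈ Icc (a - r) (a + r) from ⟨by linarith, by linarith⟩)
    (show y ∈ Icc (a - r) (a + r) from ⟨by linarith [abs_le.1 hy], by linarith [abs_le.1 hy]⟩)
  have hη : 0 ≤ η := (abs_nonneg _).trans left
  calc |s ^ 2 * dobinskiSlope m c ν y + (y - a)| ≤ η * |y - a| := by
        simpa [root] using mean_value
    _ ≤ η * r := by gcongr

theorem tendsto_dobinskiSlope_atTop (hm : 0 < m) (c ν : ℝ) :
    Tendsto (dobinskiSlope m c ν) atTop atBot := by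
  have increment := (isEquivalent_log_increment hm c).symm.tendsto_nhds tendsto_inv_atTop_zero
  exact (increment.const_mul ν).add_atBot <| tendsto_neg_atTop_atBot.comp <|
    (isEquivalent_log_mul_add_one hm).symm.tendsto_atTop Real.tendsto_log_atTop

theorem eventually_dobinskiSlope_pos (hm : 0 < m) (hc : 0 < c) (hν : Tendsto ν l atTop) {x : ℝ}
    (hx : 0 ≤ x) : ∀ᶠ i in l, 0 < dobinskiSlope m c (ν i) x := by
  have increment_pos : 0 < Real.log (m * (x + 1) + c) - Real.log (m * x + c) :=
    sub_pos.2 (Real.log_lt_log (by positivity) (by linarith))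
  exact (tendsto_atTop_add_const_right l _ (hν.atTop_mul_const increment_pos)).eventually_gt_atTop 0

theorem exists_dobinskiSlope_eq_zero (hm : 0 < m) (hc : 0 < c) {ν : ℝ}
    (h : 0 < dobinskiSlope m c ν 0) : ∃ a, 0 ≤ a ∧ dobinskiSlope m c ν a = 0 := by
  have continuous : ContinuousOn (dobinskiSlope m c ν) (Ici 0) := fun x hx =>
    (hasDerivAt_dobinskiSlope hm hc ν hx).continuousAt.continuousWithinAt
  obtain ⟨b, hb, b_nonneg⟩ := ((tendsto_dobinskiSlope_atTop hm c ν).eventually_le_atBot 0 |>.and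
    (eventually_ge_atTop 0)).exists
  obtain ⟨a, ha, root⟩ := intermediate_value_Icc' b_nonneg
    (continuous.mono Icc_subset_Ici_self) ⟨hb, h.le⟩
  exact ⟨a, ha.1, root⟩

theorem exists_tendsto_dobinskiSlope_eq_zero (hm : 0 < m) (hc : 0 < c) (hν : Tendsto ν l atTop) :
    ∃ a : ι → ℝ, Tendsto a l atTop ∧ ∀ᶠ i in l, dobinskiSlope m c (ν i) (a i) = 0 := by
  choose! a a_nonneg root using fun i =>
    exists_dobinskiSlope_eq_zero (m := m) (c := c) hm hc (ν := ν i)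
  have start_pos := eventually_dobinskiSlope_pos hm hc hν le_rfl
  refine ⟨a, tendsto_atTop.2 fun b => ?_, start_pos.mono root⟩
  filter_upwards [start_pos, eventually_dobinskiSlope_pos hm hc hν (le_max_right b 0),
    hν.eventually_ge_atTop 0] with i start_pos slope_pos ν_nonneg
  refine (le_max_left b 0).trans (le_of_not_gt fun lt => slope_pos.not_ge ?_)
  exact (antitoneOn_dobinskiSlope hm hc ν_nonneg (a_nonneg i start_pos)
    (mem_Ici.2 (le_max_right b 0)) lt.le).trans_eq (root i start_pos)

theorem isGaussianScaling_dobinskiWeight {n : ι → ℕ} (hm : 0 < m) (hc : 0 < c)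
    (ha : Tendsto a l atTop) (root : ∀ᶠ i in l, dobinskiSlope m c (n i) (a i) = 0) :
    IsGaussianScaling l (fun i => dobinskiWeight m c (n i)) a fun i => saddleScale (a i) where
  pos i := dobinskiWeight_pos hm hc (n i)
  antitone_logRatio i j k hjk := by
    rw [logRatio_dobinskiWeight hm hc, logRatio_dobinskiWeight hm hc]
    exact antitoneOn_dobinskiSlope hm hc (n i).cast_nonneg (mem_Ici.2 j.cast_nonneg)
      (mem_Ici.2 k.cast_nonneg) (Nat.cast_le.2 hjk)
  tendsto_scale := tendsto_saddleScale.comp ha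
  tendsto_centre_div_scale := tendsto_div_saddleScale.comp ha
  logRatio_approx R ε hε := by
    set R' := |R| + 1
    have R'_pos : 0 < R' := by positivity
    have curvature (T : ℝ) := (Metric.tendsto_nhds.1
      (tendsto_sq_saddleScale_mul_dobinskiCurvature hm ha root T) _ (div_pos hε R'_pos))
    filter_upwards [root, curvature (-R'), curvature R',
      (tendsto_saddleScale.comp ha).eventually_gt_atTop 0,
      (tendsto_div_saddleScale.comp ha).eventually_ge_atTop R'] with i root left right hs window
    simp only [Function.comp_apply, Real.dist_eq] at hs window left right
    intro j hj
    rw [neg_mul, ← sub_eq_add_neg] at left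
    have bound := abs_sq_mul_dobinskiSlope_add_sub_le hm hc (n i).cast_nonneg root
      ((le_div_iff₀ hs).1 window) left.le right.le (hj.trans (by
        gcongr
        exact (le_abs_self R).trans (le_add_of_nonneg_right zero_le_one)))
    rw [logRatio_dobinskiWeight hm hc]
    calc |saddleScale (a i) * dobinskiSlope m c (n i) j + (j - a i) / saddleScale (a i)|
        = |saddleScale (a i) ^ 2 * dobinskiSlope m c (n i) j + (j - a i)| / saddleScale (a i) := by
          rw [← abs_of_pos hs, ← abs_div, abs_of_pos hs]
          congr 1
          field_simp
      _ ≤ ε := by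
          rw [div_le_iff₀ hs]
          refine bound.trans_eq ?_
          field_simp

theorem isEquivalent_sq_saddleScale (ha : Tendsto a l atTop)
    (hν : ν ~[l] fun i => a i * Real.log (a i)) :
    (fun i => saddleScale (a i) ^ 2) ~[l] fun i => ν i / Real.log (ν i) ^ 2 := by
  have log_atTop := Real.tendsto_log_atTop.comp ha
  have log_log : (fun i => Real.log (Real.log (a i))) =o[l] fun i => Real.log (a i) :=
    Real.isLittleO_log_id_atTop.comp_tendsto log_atTop
  have log_equiv : (fun i => Real.log (ν i)) ~[l] fun i => Real.log (a i) := by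
    refine (hν.log (ha.atTop_mul_atTop₀ log_atTop)).trans ?_
    refine (IsEquivalent.refl.add_isLittleO log_log).congr_left ?_
    filter_upwards [ha.eventually_gt_atTop 1] with i hi
    exact (Real.log_mul (one_pos.trans hi).ne' (Real.log_pos hi).ne').symm
  refine (hν.div (log_equiv.pow 2)).symm.congr_left ?_
  filter_upwards [ha.eventually_gt_atTop 1] with i hi
  have := (Real.log_pos hi).ne'
  simp only [Pi.div_apply, Pi.pow_apply]
  rw [sq_saddleScale hi]
  field_simp

end SaddlePoint

theorem isEquivalent_Vn {m c : ℕ} (hm : 0 < m) (hc : 0 < c) :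
    Asymptotics.IsEquivalent atTop (Vn m c) fun n => n / Real.log n ^ 2 := by
  have hm' : (0 : ℝ) < m := Nat.cast_pos.2 hm
  have hc' : (0 : ℝ) < c := Nat.cast_pos.2 hc
  obtain ⟨a, ha, root⟩ := exists_tendsto_dobinskiSlope_eq_zero hm' hc'
    (tendsto_natCast_atTop_atTop (R := ℝ))
  have scaling := isGaussianScaling_dobinskiWeight hm' hc' ha root
  refine Asymptotics.IsEquivalent.trans ?_ <| isEquivalent_sq_saddleScale ha <|
    isEquivalent_mul_log_of_dobinskiSlope_eq_zero hm' ha root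
  have scale_ne := scaling.tendsto_scale.eventually_ne_atTop 0
  refine (Asymptotics.isEquivalent_iff_tendsto_one (scale_ne.mono fun n => pow_ne_zero 2)).2 ?_
  have correction := ((tendsto_pow_atTop two_ne_zero).comp
    scaling.tendsto_scale).const_div_atTop (1 / m : ℝ)
  rw [← sub_zero (1 : ℝ)]
  refine (scaling.tendsto_normalizedVariance.sub correction).congr' ?_
  filter_upwards [scale_ne] with n hs
  rw [Pi.div_apply, Vn_eq_normalizedMoment hm hc n (a n) hs, sub_div,
    mul_div_cancel_left₀ _ (pow_ne_zero 2 hs)]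
  rfl

/-- `V_n ~ n/log² n` as `n → ∞`, i.e. `V_n·(log² n)/n → 1`; in particular
`V_n → ∞`. -/
theorem stmt_18 (m c : ℕ) (hm : 0 < m) (hc : 0 < c) :
    Tendsto (fun n : ℕ => Vn m c n * (Real.log n) ^ 2 / n) atTop (nhds 1) ∧
    Tendsto (fun n : ℕ => Vn m c n) atTop atTop := by
  have divergence : Tendsto (fun n : ℕ => n / Real.log n ^ 2) atTop atTop :=
    (tendsto_div_log_pow_atTop 2).comp tendsto_natCast_atTop_atTop
  have asymptotic := isEquivalent_Vn hm hc
  refine ⟨?_, asymptotic.symm.tendsto_atTop divergence⟩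
  refine ((Asymptotics.isEquivalent_iff_tendsto_one
    (divergence.eventually_ne_atTop 0)).1 asymptotic).congr fun n => ?_
  rw [Pi.div_apply, div_div_eq_mul_div]
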